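/- Let (V, c) be a finite-dimensional braided vector space that is left triangular with respect to the totally ordered basis X, let u be a Lyndon word, and let p, q be positive integers. Write X^q_{≫u} for the set of words v of length q with v ≫ u. Then c_{p,q}(V^{⊗p} ⊗ kX^q_{≫u}) ⊆ kX^q_{≫u} ⊗ V^{⊗p}. -/

import Mathlib

/-!
We identify the finite-dimensional vector space `V` with basis `X` with the free
`k`-module on `X`, and the tensor power `V^{⊗n}` with the free `k`-module on the
words of length `n` in letters from `X`; correspondingly `V^{⊗n} ⊗ V^{⊗m}` is the
free `k`-module on pairs of words.  A linear endomorphism `c` of `V ⊗ V` is encoded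
by its matrix `c : X → X → ((X × X) →₀ k)`, via `c(x ⊗ y) = Σ_{(z,w)} c x y (z,w) • z ⊗ w`.
-/

variable {k : Type*} [Field k] {X : Type*} [Fintype X] [LinearOrder X]

/-- The maps `c_{1,m} : V ⊗ V^{⊗m} → V^{⊗m} ⊗ V`, defined on basis vectors by
`c_{1,0} = id` and `c_{1,m+1} = (id_V ⊗ c_{1,m}) ∘ (c ⊗ id_{V^{⊗m}})`. -/
noncomputable def braidOne (c : X → X → ((X × X) →₀ k)) :
    X → List X → ((List X × List X) →₀ k)
  | x, [] => Finsupp.single ([], [x]) 1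
  | x, y :: v =>
      (c x y).sum fun p a =>
        a • Finsupp.mapDomain (fun q : List X × List X => (p.1 :: q.1, q.2))
          (braidOne c p.2 v)

/-- Auxiliary version of `c_{n,m}` where the first word is given reversed:
`c_{0,m} = id` and `c_{n+1,m} = (c_{n,m} ⊗ id_V) ∘ (id_{V^{⊗n}} ⊗ c_{1,m})`. -/
noncomputable def braidRev (c : X → X → ((X × X) →₀ k)) :
    List X → List X → ((List X × List X) →₀ k)
  | [], v => Finsupp.single (v, []) 1
  | x :: urev, v =>
      (braidOne c x v).sum fun p a =>
        a • Finsupp.mapDomain (fun q : List X × List X => (q.1, q.2 ++ p.2))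
          (braidRev c urev p.1)

/-- The braiding maps `c_{n,m} : V^{⊗n} ⊗ V^{⊗m} → V^{⊗m} ⊗ V^{⊗n}` on basis vectors:
`braidWords c u v` is `c_{l(u),l(v)}(u ⊗ v)`. -/
noncomputable def braidWords (c : X → X → ((X × X) →₀ k)) (u v : List X) :
    (List X × List X) →₀ k :=
  braidRev c u.reverse v

/-- `c` is left triangular with respect to the ordered basis `X`:
`c(x ⊗ y) = γ_{x,y} • y ⊗ x + Σ_{z > y} z ⊗ v_{x,y,z}`, i.e. the coefficient of
`c(x ⊗ y)` at `z ⊗ w` vanishes unless `(z, w) = (y, x)` or `z > y`. -/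
def LeftTriangularMat (c : X → X → ((X × X) →₀ k)) : Prop :=
  ∀ (x y : X) (zw : X × X), c x y zw ≠ 0 → (zw.1 = y ∧ zw.2 = x) ∨ y < zw.1

/-- `c ⊗ id` acting on `V ⊗ V ⊗ V` (matrix form). -/
noncomputable def act12 (c : X → X → ((X × X) →₀ k)) (f : (X × X × X) →₀ k) :
    (X × X × X) →₀ k :=
  f.sum fun t a => a • ((c t.1 t.2.1).sum fun p b => Finsupp.single (p.1, p.2, t.2.2) b)

/-- `id ⊗ c` acting on `V ⊗ V ⊗ V` (matrix form). -/
noncomputable def act23 (c : X → X → ((X × X) →₀ k)) (f : (X × X × X) →₀ k) :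
    (X × X × X) →₀ k :=
  f.sum fun t a => a • ((c t.2.1 t.2.2).sum fun p b => Finsupp.single (t.1, p.1, p.2) b)

/-- `c` satisfies the braid equation
`(c ⊗ id)(id ⊗ c)(c ⊗ id) = (id ⊗ c)(c ⊗ id)(id ⊗ c)`. -/
def SatisfiesBraidEq (c : X → X → ((X × X) →₀ k)) : Prop :=
  ∀ f : (X × X × X) →₀ k,
    act12 c (act23 c (act12 c f)) = act23 c (act12 c (act23 c f))

/-- The linear extension of `c` to an endomorphism of `V ⊗ V`. -/
noncomputable def extendMat (c : X → X → ((X × X) →₀ k)) (f : (X × X) →₀ k) :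
    (X × X) →₀ k :=
  f.sum fun p a => a • c p.1 p.2

/-- The coefficient `γ_{u,v} = Π_{x ∈ u} Π_{y ∈ v} γ x y`. -/
def gammaWords (γ : X → X → k) (u v : List X) : k :=
  (u.map fun x => (v.map fun y => γ x y).prod).prod

/-- A word `u` is a Lyndon word if it is nonempty and lexicographically smaller than
each of its proper nonempty suffixes. -/
def IsLyndon {X : Type*} [LinearOrder X] (u : List X) : Prop :=
  u ≠ [] ∧ ∀ v w : List X, v ≠ [] → w ≠ [] → u = v ++ w → List.Lex (· < ·) u w

/-- `ls` is a Lyndon factorization of `u`: all factors are Lyndon words, the factors are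
(lexicographically) nonincreasing, and their concatenation is `u`. -/
def IsLyndonFactorization {X : Type*} [LinearOrder X] (ls : List (List X)) (u : List X) : Prop :=
  (∀ l ∈ ls, IsLyndon l) ∧ ls.Chain' (fun a b => ¬ List.Lex (· < ·) a b) ∧ ls.flatten = u

/-- `v ≫ u` : the first Lyndon letter of the Lyndon decomposition of `v` is
lexicographically greater than `u`. -/
def MuchGt {X : Type*} [LinearOrder X] (v u : List X) : Prop :=
  ∃ (l : List X) (t : List (List X)),
    IsLyndonFactorization (l :: t) v ∧ List.Lex (· < ·) u l

/-- The word `b` exceeds the word `a` at the first position where they differ; in particular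
neither word is a prefix of the other. -/
inductive LetterLt {X : Type*} [LinearOrder X] : List X → List X → Prop
  | head {x y : X} (a b : List X) (h : x < y) : LetterLt (x :: a) (y :: b)
  | cons (x : X) {a b : List X} (h : LetterLt a b) : LetterLt (x :: a) (x :: b)

namespace LetterLt

variable {X : Type*} [LinearOrder X] {a b d : List X}

theorem not_nil (a : List X) : ¬ LetterLt a [] := nofun

theorem lt (h : LetterLt a b) : a < b := by
  induction h with
  | head a b h => exact List.Lex.rel h
  | cons x h ih => exact List.Lex.cons ih

theorem trans (hab : LetterLt a b) (hbd : LetterLt b d) : LetterLt a d := by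
  induction hab generalizing d with
  | head a b h =>
    cases hbd with
    | head _ _ h' => exact head _ _ (h.trans h')
    | cons _ _ => exact head _ _ h
  | cons x h ih =>
    cases hbd with
    | head _ _ h' => exact head _ _ h'
    | cons _ h' => exact cons _ (ih h')

theorem append (h : LetterLt a b) (s t : List X) : LetterLt (a ++ s) (b ++ t) := by
  induction h with
  | head a b h => exact head _ _ h
  | cons x h ih => exact cons x ih

theorem append_left (w : List X) (h : LetterLt a b) : LetterLt (w ++ a) (w ++ b) := by
  induction w with
  | nil => exact h
  | cons x w ih => exact cons x ih

theorem of_append_left {w : List X} (h : LetterLt (w ++ a) (w ++ b)) : LetterLt a b := by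
  induction w with
  | nil => exact h
  | cons x w ih =>
    cases h with
    | head _ _ h => exact absurd h (lt_irrefl x)
    | cons _ h => exact ih h

end LetterLt

section Words

variable {X : Type*} [LinearOrder X]

theorem letterLt_or_append_of_lt {a b : List X} (h : a < b) :
    LetterLt a b ∨ ∃ s, s ≠ [] ∧ b = a ++ s := by
  have h' : List.Lex (· < ·) a b := h
  clear h
  induction h' with
  | nil => exact Or.inr ⟨_, List.cons_ne_nil _ _, rfl⟩
  | rel h => exact Or.inl (.head _ _ h)
  | cons h ih =>
    rcases ih with ih | ⟨s, hs, rfl⟩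
    · exact Or.inl (.cons _ ih)
    · exact Or.inr ⟨s, hs, rfl⟩

theorem letterLt_of_lt_of_length_le {a b : List X} (h : a < b) (hl : b.length ≤ a.length) :
    LetterLt a b := by
  rcases letterLt_or_append_of_lt h with h | ⟨s, hs, rfl⟩
  · exact h
  · have := List.length_pos_of_ne_nil hs
    simp only [List.length_append] at hl
    omega

theorem append_lt_append_left {a b : List X} (w : List X) (h : a < b) : w ++ a < w ++ b := by
  induction w with
  | nil => exact h
  | cons x w ih => exact List.Lex.cons ih

/-- A Lyndon word is smaller than each proper nonempty suffix already at a letter. -/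
theorem IsLyndon.letterLt_suffix {v w : List X} (h : IsLyndon (v ++ w)) (hv : v ≠ [])
    (hw : w ≠ []) : LetterLt (v ++ w) w :=
  letterLt_of_lt_of_length_le (h.2 v w hv hw rfl) (by simp)

theorem isLyndon_singleton (x : X) : IsLyndon [x] := by
  refine ⟨List.cons_ne_nil _ _, fun v w hv hw h => ?_⟩
  have h' := congrArg List.length h
  have := List.length_pos_of_ne_nil hv
  have := List.length_pos_of_ne_nil hw
  simp only [List.length_append, List.length_singleton] at h'
  omega

theorem IsLyndon.append_lt {a l : List X} (ha : IsLyndon a) (hl : IsLyndon l) (h : a < l) :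
    a ++ l < l := by
  rcases letterLt_or_append_of_lt h with h | ⟨s, hs, rfl⟩
  · simpa using (h.append l []).lt
  · exact append_lt_append_left a (hl.letterLt_suffix ha.1 hs).lt

theorem IsLyndon.append {a l : List X} (ha : IsLyndon a) (hl : IsLyndon l) (h : a < l) :
    IsLyndon (a ++ l) := by
  refine ⟨by simp [ha.1], fun v w hv hw hvw => ?_⟩
  change a ++ l < w
  rcases List.append_eq_append_iff.1 hvw with ⟨s, rfl, rfl⟩ | ⟨s, rfl, rfl⟩
  · rcases eq_or_ne s [] with rfl | hs
    · exact ha.append_lt hl h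
    · exact (ha.append_lt hl h).trans (hl.letterLt_suffix hs hw).lt
  · rcases eq_or_ne s [] with rfl | hs
    · rw [List.append_nil] at ha h ⊢
      exact ha.append_lt hl h
    · exact ((ha.letterLt_suffix hv hs).append l l).lt

theorem IsLyndon.exists_factorization_append {a : List X} (ha : IsLyndon a)
    {ls : List (List X)} {v : List X} (h : IsLyndonFactorization ls v) :
    ∃ l t, IsLyndonFactorization (l :: t) (a ++ v) := by
  induction ls generalizing a v with
  | nil =>
    obtain ⟨-, -, rfl⟩ := h
    exact ⟨a, [], by simpa using ha, List.isChain_singleton _, rfl⟩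
  | cons l t ih =>
    obtain ⟨hL, hC, rfl⟩ := h
    by_cases hal : a < l
    · have := ih (ha.append (hL l (by simp)) hal)
        ⟨fun m hm => hL m (by simp [hm]), List.IsChain.tail hC, rfl⟩
      simpa using this
    · refine ⟨a, l :: t, ?_, List.isChain_cons_cons.2 ⟨hal, hC⟩, rfl⟩
      intro m hm
      rcases List.mem_cons.1 hm with rfl | hm
      exacts [ha, hL m hm]

/-- Existence part of the Chen–Fox–Lyndon theorem. -/
theorem exists_lyndonFactorization (v : List X) : ∃ ls, IsLyndonFactorization ls v := by
  induction v with
  | nil => exact ⟨[], by simp, List.isChain_nil, rfl⟩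
  | cons x v ih =>
    obtain ⟨ls, h⟩ := ih
    obtain ⟨l, t, h⟩ := (isLyndon_singleton x).exists_factorization_append h
    exact ⟨l :: t, h⟩

theorem LetterLt.exists_replicate_of_append {u s : List X} (hu : u ≠ [])
    (h : LetterLt (u ++ s) s) : ∃ n, LetterLt (List.replicate n u).flatten s := by
  induction hn : s.length using Nat.strong_induction_on generalizing s with
  | _ n ih =>
    subst hn
    rcases lt_trichotomy u s with hus | rfl | hsu
    · rcases letterLt_or_append_of_lt hus with h' | ⟨s', -, rfl⟩
      · exact ⟨1, by simpa using h'⟩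
      · have hlen := List.length_pos_of_ne_nil hu
        obtain ⟨n, hn⟩ := ih s'.length (by simp; omega) h.of_append_left rfl
        exact ⟨n + 1, by simpa [List.replicate_succ] using hn.append_left u⟩
    · have h' : LetterLt (u ++ u) (u ++ []) := by simpa using h
      exact absurd h'.of_append_left (not_nil _)
    · rcases letterLt_or_append_of_lt hsu with h' | ⟨s', -, rfl⟩
      · have h'' : LetterLt s (u ++ s) := by simpa using h'.append [] s
        exact absurd h.lt h''.lt.asymm
      · have h' : LetterLt (s ++ (s' ++ s)) (s ++ []) := by simpa using h
        exact absurd h'.of_append_left (not_nil _)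

theorem MuchGt.exists_replicate_letterLt {u v : List X} (hu : IsLyndon u) (h : MuchGt v u) :
    ∃ n, LetterLt (List.replicate n u).flatten v := by
  obtain ⟨l, t, ⟨hL, -, rfl⟩, hul⟩ := h
  suffices ∃ n, LetterLt (List.replicate n u).flatten l by
    obtain ⟨n, hn⟩ := this
    exact ⟨n, by simpa using hn.append [] t.flatten⟩
  rcases letterLt_or_append_of_lt hul with h | ⟨s, hs, rfl⟩
  · exact ⟨1, by simpa using h⟩
  · obtain ⟨n, hn⟩ := LetterLt.exists_replicate_of_append hu.1
      ((hL (u ++ s) (by simp)).letterLt_suffix hu.1 hs)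
    exact ⟨n + 1, by simpa [List.replicate_succ] using hn.append_left u⟩

/-- A product of words not exceeding the Lyndon word `u` does not exceed a power of `u` at a
letter. -/
theorem IsLyndon.not_letterLt_flatten {u : List X} (hu : IsLyndon u) {ls : List (List X)}
    (hls : ∀ l ∈ ls, l ≤ u) (n : ℕ) :
    ¬ LetterLt (List.replicate n u).flatten ls.flatten := by
  induction ls generalizing n with
  | nil => exact LetterLt.not_nil _
  | cons l t ih =>
    intro h
    have ih := ih fun m hm => hls m (by simp [hm])
    cases n with
    | zero => cases h
    | succ n =>
      rw [List.replicate_succ, List.flatten_cons, List.flatten_cons] at h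
      rcases (hls l (by simp)).lt_or_eq with hlu | rfl
      · rcases letterLt_or_append_of_lt hlu with h' | ⟨s, hs, rfl⟩
        · exact absurd h.lt (h'.append _ _).lt.asymm
        · rw [List.append_assoc] at h
          rcases eq_or_ne l [] with rfl | hl
          · exact ih (n + 1) (by simpa [List.replicate_succ] using h)
          · refine ih 1 (LetterLt.trans ?_ h.of_append_left)
            simpa using (hu.letterLt_suffix hl hs).append [] (List.replicate n (l ++ s)).flatten
      · exact ih n h.of_append_left

theorem MuchGt.of_replicate_letterLt {u v : List X} (hu : IsLyndon u) {n : ℕ}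
    (h : LetterLt (List.replicate n u).flatten v) : MuchGt v u := by
  obtain ⟨ls, hL, hC, rfl⟩ := exists_lyndonFactorization v
  cases ls with
  | nil => exact absurd h (LetterLt.not_nil _)
  | cons l t =>
    refine ⟨l, t, ⟨hL, hC, rfl⟩, ?_⟩
    by_contra hul
    have hlu : l ≤ u := not_lt.1 hul
    have hC' : (l :: t).IsChain (fun a b => b ≤ a) := hC.imp fun _ _ h => not_lt.1 h
    refine hu.not_letterLt_flatten (fun m hm => ?_) n h
    rcases List.mem_cons.1 hm with rfl | hm
    · exact hlu
    · exact ((List.pairwise_cons.1 (List.isChain_iff_pairwise.1 hC')).1 m hm).trans hlu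

theorem MuchGt.of_letterLt {u v z : List X} (hu : IsLyndon u) (hv : MuchGt v u)
    (h : LetterLt v z) : MuchGt z u :=
  let ⟨_, hn⟩ := hv.exists_replicate_letterLt hu
  .of_replicate_letterLt hu (hn.trans h)

end Words

section Support

variable {k : Type*} [Field k] {X : Type*} [LinearOrder X]

theorem Finsupp.mapDomain_mem_supported_of_mapsTo {α β : Type*} {f : α → β} {s : Set α}
    {t : Set β} (hf : Set.MapsTo f s t) {g : α →₀ k} (hg : g ∈ Finsupp.supported k k s) :
    Finsupp.mapDomain f g ∈ Finsupp.supported k k t :=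
  Finsupp.supported_mono hf.image_subset
    (Finsupp.lmapDomain_supported k k f s ▸ Submodule.mem_map_of_mem hg)

theorem braidOne_mem_supported {c : X → X → ((X × X) →₀ k)} (hc : LeftTriangularMat c)
    (x : X) (v : List X) :
    braidOne c x v ∈ Finsupp.supported k k
      {p | p.1.length = v.length ∧ p.2.length = 1 ∧ (p.1 = v ∨ LetterLt v p.1)} := by
  induction v generalizing x with
  | nil => exact Finsupp.single_mem_supported k 1 (by simp)
  | cons y v ih =>
    refine Submodule.sum_mem _ fun p hp => Submodule.smul_mem _ _ ?_
    refine Finsupp.mapDomain_mem_supported_of_mapsTo ?_ (ih p.2)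
    rintro ⟨z, a⟩ ⟨hz, ha, h⟩
    refine ⟨congrArg Nat.succ hz, ha, ?_⟩
    rcases hc x y p (Finsupp.mem_support_iff.1 hp) with ⟨hpy, -⟩ | hlt
    · subst hpy
      exact h.imp (congrArg _) (.cons _)
    · exact Or.inr (.head _ _ hlt)

theorem braidRev_mem_supported {c : X → X → ((X × X) →₀ k)} (hc : LeftTriangularMat c)
    (w v : List X) :
    braidRev c w v ∈ Finsupp.supported k k
      {p | p.1.length = v.length ∧ p.2.length = w.length ∧ (p.1 = v ∨ LetterLt v p.1)} := by
  induction w generalizing v with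
  | nil => exact Finsupp.single_mem_supported k 1 (by simp)
  | cons x w ih =>
    refine Submodule.sum_mem _ fun p hp => Submodule.smul_mem _ _ ?_
    obtain ⟨hl, hl', h⟩ := (Finsupp.mem_supported k _).1 (braidOne_mem_supported hc x v) hp
    refine Finsupp.mapDomain_mem_supported_of_mapsTo ?_ (ih p.1)
    rintro ⟨z, a⟩ ⟨hz, ha, hzp⟩
    refine ⟨hz.trans hl, by simp_all, ?_⟩
    rcases h with rfl | h
    · exact hzp
    · rcases hzp with rfl | hzp
      exacts [Or.inr h, Or.inr (h.trans hzp)]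

end Support

/-- Let `(V, c)` be a finite-dimensional braided vector space, left triangular with
respect to `X`, let `u` be a Lyndon word, and `p, q` positive integers.  Then
`c_{p,q}(V^{⊗p} ⊗ k X^q_{≫u}) ⊆ k X^q_{≫u} ⊗ V^{⊗p}`. -/
theorem braidWords_muchGt
    (c : X → X → ((X × X) →₀ k))
    (hcbij : Function.Bijective (extendMat c))
    (hcbraid : SatisfiesBraidEq c)
    (hctri : LeftTriangularMat c)
    (u : List X) (hu : IsLyndon u)
    (p q : ℕ) (hp : 0 < p) (hq : 0 < q)
    (w v : List X) (hw : w.length = p) (hv : v.length = q) (hvu : MuchGt v u) :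
    braidWords c w v ∈
      Submodule.span k {f : (List X × List X) →₀ k |
        ∃ z a : List X, z.length = q ∧ MuchGt z u ∧ a.length = p ∧
          f = Finsupp.single (z, a) 1} := by
  have hsub : {r : List X × List X | r.1.length = v.length ∧ r.2.length = w.reverse.length ∧
        (r.1 = v ∨ LetterLt v r.1)} ⊆
      {r | r.1.length = q ∧ MuchGt r.1 u ∧ r.2.length = p} := by
    rintro ⟨z, a⟩ ⟨hz, ha, h⟩
    refine ⟨hz.trans hv, ?_, by simpa [hw] using ha⟩
    rcases h with rfl | h
    exacts [hvu, hvu.of_letterLt hu h]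
  have hmem := Finsupp.supported_mono hsub (braidRev_mem_supported hctri w.reverse v)
  rw [Finsupp.supported_eq_span_single] at hmem
  refine Submodule.span_mono ?_ hmem
  rintro _ ⟨⟨z, a⟩, ⟨hz, hzu, ha⟩, rfl⟩
  exact ⟨z, a, hz, hzu, ha, rfl⟩
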